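/- Let X be a Peano continuum having uncountably many cut points. Then X is a topological fractal with witnessing number two, i.e., there exist two continuous self-maps f, g of X such that {f, g} is topologically contractive and f(X) ∪ g(X) = X. -/

import Mathlib

/-- A family `F` of self-maps of a metric space `X` is topologically contractive if for
every `ε > 0` there is `k` such that every composition of `k` maps from `F` has image of
diameter less than `ε`. -/
def TopContractive {X : Type*} [MetricSpace X] (F : Set (X → X)) : Prop :=
  ∀ ε > (0 : ℝ), ∃ k : ℕ, ∀ l : List (X → X), (∀ f ∈ l, f ∈ F) → l.length = k →
    Metric.diam (Set.range (l.foldr (· ∘ ·) id)) < ε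

/-- `x` is a cut point of the connected space `X` if `X \ {x}` is not connected. -/
def IsCutPoint {X : Type*} [TopologicalSpace X] (x : X) : Prop :=
  ¬ IsPreconnected ({x}ᶜ : Set X)

/-!
If uncountably many points cut `X`, then uncountably many of them separate one pair of points
`a`, `b`. The components of `a` in their complements form a chain of open sets, which contains a
subchain indexed by the rationals, and Urysohn's construction turns the latter into a continuous
`φ : X → [0, 1]` any two of whose levels are separated by an open set with at most one frontier
point. By local connectedness, a level of `φ` is then approached from below through a single point
of it, its lower gate, and from above through its upper gate. Hence the level is a retract of `X`
and, by the Hahn-Mazurkiewicz theorem, it is traversed by a path from its lower to its upper gate.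

Let `ν` be the image under `φ` of a probability measure which charges every nonempty open set. The
function `G t = ν (-∞, t] + 2 t` jumps at every level with nonempty interior, while the other levels
are singletons. Running through the path of the level `t` during the jump of `G` at `t` gives a
surjection `Γ : [0, 3] → X`. It is continuous because of the gates, and `φ ∘ Γ` is `1/2`-Lipschitz
because `G` has slope at least `2`. Now `Γ ∘ (3/2 φ)` and `Γ ∘ (3/2 + 3/2 φ)` cover `X` and
contract `φ`-differences by the factor `3/4`, so that long compositions of them are nearly constant.
-/

open Set Filter Topology
open scoped NNReal

section Contraction

variable {X Y : Type*} [PseudoMetricSpace Y] {φ : X → Y} {H : Set (Y → X)}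
  {K : ℝ≥0}

theorem dist_foldr_comp_le (hφ : Bornology.IsBounded (range φ))
    (hK : ∀ h ∈ H, LipschitzWith K (φ ∘ h)) {l : List (X → X)} (hl : ∀ f ∈ l, f ∈ (· ∘ φ) '' H)
    (x y : X) :
    dist (φ (l.foldr (· ∘ ·) id x)) (φ (l.foldr (· ∘ ·) id y)) ≤
      K ^ l.length * Metric.diam (range φ) := by
  induction l with
  | nil => simpa using Metric.dist_le_diam_of_mem hφ (mem_range_self x) (mem_range_self y)
  | cons f l ih =>
    obtain ⟨⟨h, hH, rfl⟩, hl'⟩ := List.forall_mem_cons.1 hl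
    rw [List.length_cons, pow_succ', mul_assoc]
    exact ((hK h hH).dist_le_mul _ _).trans (by gcongr; exact ih hl')

theorem topContractive_image_comp [MetricSpace X] (hφ : Bornology.IsBounded (range φ))
    (hH : H.Finite) (hK : ∀ h ∈ H, LipschitzWith K (φ ∘ h)) (hK1 : K < 1)
    (huc : ∀ h ∈ H, UniformContinuous h) : TopContractive ((· ∘ φ) '' H) := by
  intro ε hε
  have hunif : ∀ᶠ p in uniformity Y, ∀ h ∈ H, dist (h p.1) (h p.2) < ε / 2 :=
    hH.eventually_all.2 fun h hh => huc h hh (Metric.dist_mem_uniformity (half_pos hε))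
  obtain ⟨δ, hδ, hδH⟩ := Metric.mem_uniformity_dist.1 hunif
  have hlim : Tendsto (fun k => (K : ℝ) ^ k * Metric.diam (range φ)) atTop (𝓝 0) := by
    simpa using (tendsto_pow_atTop_nhds_zero_of_lt_one K.2 hK1).mul_const _
  obtain ⟨k, hk⟩ := (hlim.eventually_lt_const hδ).exists
  refine ⟨k + 1, fun l hl hlen => ?_⟩
  obtain _ | ⟨f, l⟩ := l
  · simp at hlen
  obtain ⟨⟨h, hh, rfl⟩, hl'⟩ := List.forall_mem_cons.1 hl
  obtain rfl : l.length = k := by simpa using hlen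
  refine (Metric.diam_le_of_forall_dist_le (half_pos hε).le ?_).trans_lt (half_lt_self hε)
  rintro _ ⟨x, rfl⟩ _ ⟨y, rfl⟩
  exact (hδH ((dist_foldr_comp_le hφ hK hl' x y).trans_lt hk) h hh).le

end Contraction

section Walks

theorem preconnected_fromRel_of_eventually {α : Type*} [TopologicalSpace α] [PreconnectedSpace α]
    {R : α → α → Prop} (hR : ∀ a, ∀ᶠ b in 𝓝 a, R a b) :
    (SimpleGraph.fromRel R).Preconnected := by
  have : Std.Symm (SimpleGraph.fromRel R).Reachable := ⟨fun _ _ h => h.symm⟩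
  refine PreconnectedSpace.induction₂ _ (fun a => (hR a).mono fun b hab => ?_)
    ⟨fun _ _ _ => SimpleGraph.Reachable.trans⟩
  obtain rfl | hne := eq_or_ne a b
  · exact SimpleGraph.Reachable.refl a
  · exact SimpleGraph.Adj.reachable ((SimpleGraph.fromRel_adj R a b).2 ⟨hne, Or.inl hab⟩)

theorem exists_walk_subset_support {V : Type*} {G : SimpleGraph V} (hG : G.Preconnected)
    {A : Set V} (hA : A.Finite) (u v : V) : ∃ p : G.Walk u v, ∀ a ∈ A, a ∈ p.support := by
  induction A, hA using Set.Finite.induction_on with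
  | empty => exact (hG u v).elim fun p => ⟨p, by simp⟩
  | @insert a A _ _ ih =>
    obtain ⟨p, hp⟩ := ih
    obtain ⟨q⟩ := hG u a
    refine ⟨(q.append q.reverse).append p, forall_mem_insert.2 ⟨?_, fun b hb => ?_⟩⟩
    · simp
    · exact (SimpleGraph.Walk.mem_support_append_iff _ _).2 (Or.inr (hp b hb))

theorem eventually_exists_walk_through {α : Type*} {R : α → α → Prop} (hrefl : ∀ a, R a a)
    (hsymm : ∀ a b, R a b → R b a) (hconn : (SimpleGraph.fromRel R).Preconnected)
    {A : Set α} (hA : A.Finite) (u v : α) :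
    ∀ᶠ k in atTop, ∃ w : ℕ → α, w 0 = u ∧ w k = v ∧ (∀ j, R (w j) (w (j + 1))) ∧
      ∀ a ∈ A, ∃ j < k, w j = a := by
  obtain ⟨p, hp⟩ := exists_walk_subset_support hconn hA u v
  filter_upwards [eventually_gt_atTop p.length] with k hk
  refine ⟨p.getVert, p.getVert_zero, p.getVert_of_length_le hk.le, fun j => ?_, fun a ha => ?_⟩
  · obtain hj | hj := lt_or_ge j p.length
    · exact (p.adj_getVert_succ hj).2.elim id (hsymm _ _)
    · rw [p.getVert_of_length_le hj, p.getVert_of_length_le (by omega)]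
      exact hrefl v
  · obtain ⟨j, rfl, hj⟩ := SimpleGraph.Walk.mem_support_iff_exists_getVert.1 (hp a ha)
    exact ⟨j, hj.trans_lt hk, rfl⟩

end Walks

section BallComponent

variable {X : Type*} [PseudoMetricSpace X] {x y : X} {ε : ℝ}

/-- The connected component of `x` in the closed ball of radius `ε` around `x`. -/
def ballComponent (x : X) (ε : ℝ) : Set X :=
  connectedComponentIn (Metric.closedBall x ε) x

theorem self_mem_ballComponent (hε : 0 ≤ ε) (x : X) : x ∈ ballComponent x ε :=
  mem_connectedComponentIn (Metric.mem_closedBall_self hε)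

theorem isPreconnected_ballComponent : IsPreconnected (ballComponent x ε) :=
  isPreconnected_connectedComponentIn

theorem dist_le_of_mem_ballComponent (h : y ∈ ballComponent x ε) : dist y x ≤ ε :=
  Metric.mem_closedBall.1 (connectedComponentIn_subset _ _ h)

theorem ballComponent_mono {δ : ℝ} (h : δ ≤ ε) : ballComponent x δ ⊆ ballComponent x ε :=
  connectedComponentIn_mono x (Metric.closedBall_subset_closedBall h)

theorem ballComponent_mem_nhds [LocallyConnectedSpace X] (hε : 0 < ε) (x : X) :
    ballComponent x ε ∈ 𝓝 x :=
  connectedComponentIn_mem_nhds (Metric.closedBall_mem_nhds x hε)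

theorem mem_ballComponent_of_mem_half (hε : 0 ≤ ε) (h : y ∈ ballComponent x (ε / 2)) :
    x ∈ ballComponent y ε := by
  refine isPreconnected_ballComponent.subset_connectedComponentIn h (fun z hz => ?_)
    (self_mem_ballComponent (by positivity) x)
  exact (dist_triangle_right z y x).trans (by
    linarith [dist_le_of_mem_ballComponent hz, dist_le_of_mem_ballComponent h])

/-- The points `y 0, …, y N` form an `ε`-chain: each lies in the `ε`-ball component of the previous
one, and the ball components of `y 0, …, y (N - 1)` cover the space. -/
structure IsBallChain (ε : ℝ) (N : ℕ) (y : ℕ → X) : Prop where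
  succ_mem : ∀ i < N, y (i + 1) ∈ ballComponent (y i) ε
  exists_mem : ∀ x, ∃ i < N, x ∈ ballComponent (y i) ε

theorem IsBallChain.nonneg {N : ℕ} {y : ℕ → X} (h : IsBallChain ε N y) : 0 ≤ ε := by
  obtain ⟨i, -, hi⟩ := h.exists_mem (y 0)
  exact dist_nonneg.trans (dist_le_of_mem_ballComponent hi)

variable [LocallyConnectedSpace X]

theorem eventually_exists_walk_of_isPreconnected {C A : Set X} (hC : IsPreconnected C)
    (hA : A.Finite) (hε : 0 < ε) (hx : x ∈ C) (hy : y ∈ C) :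
    ∀ᶠ k in atTop, ∃ w : ℕ → X, w 0 = x ∧ w k = y ∧ (∀ j, w j ∈ C) ∧
      (∀ j, w (j + 1) ∈ ballComponent (w j) ε) ∧ ∀ a ∈ A ∩ C, ∃ j < k, w j = a := by
  have : PreconnectedSpace C := Subtype.preconnectedSpace hC
  let R : C → C → Prop := fun a b =>
    (b : X) ∈ ballComponent (a : X) ε ∧ (a : X) ∈ ballComponent (b : X) ε
  have hconn : (SimpleGraph.fromRel R).Preconnected := by
    refine preconnected_fromRel_of_eventually fun a => ?_
    filter_upwards [continuous_subtype_val.continuousAt (ballComponent_mem_nhds (half_pos hε) _)]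
      with b hb
    exact ⟨ballComponent_mono (half_le_self hε.le) hb, mem_ballComponent_of_mem_half hε.le hb⟩
  filter_upwards [eventually_exists_walk_through (R := R)
    (fun a => ⟨self_mem_ballComponent hε.le _, self_mem_ballComponent hε.le _⟩)
    (fun _ _ => And.symm) hconn (hA.preimage Subtype.val_injective.injOn) ⟨x, hx⟩ ⟨y, hy⟩]
    with k ⟨w, h0, hk, hR, hvisit⟩
  refine ⟨fun j => w j, congrArg Subtype.val h0, congrArg Subtype.val hk, fun j => (w j).2,
    fun j => (hR j).1, fun a ha => ?_⟩
  obtain ⟨j, hj, hwj⟩ := hvisit ⟨a, ha.2⟩ ha.1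
  exact ⟨j, hj, congrArg Subtype.val hwj⟩

theorem exists_finite_ballComponent_cover [CompactSpace X] (hε : 0 < ε) :
    ∃ A : Set X, A.Finite ∧ ∀ x : X, ∃ a ∈ A, x ∈ ballComponent a ε := by
  obtain ⟨A, -, hA⟩ := isCompact_univ.elim_nhds_subcover (fun x : X => ballComponent x ε)
    fun x _ => ballComponent_mem_nhds hε x
  exact ⟨A, A.finite_toSet, fun x => by simpa using hA (mem_univ x)⟩

theorem apply_succ_div_mod {α : Type*} {w : ℕ → ℕ → α} {j k : ℕ} (hk : 0 < k)
    (h : w (j / k) k = w (j / k + 1) 0) :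
    w ((j + 1) / k) ((j + 1) % k) = w (j / k) (j % k + 1) := by
  have hj : j + 1 = j % k + 1 + k * (j / k) := by rw [add_right_comm, Nat.mod_add_div]
  rw [hj, Nat.add_mul_div_left _ _ hk, Nat.add_mul_mod_self_left]
  obtain hlt | heq := (Nat.succ_le_of_lt (Nat.mod_lt j hk)).lt_or_eq
  · rw [Nat.div_eq_of_lt hlt, Nat.mod_eq_of_lt hlt, zero_add]
  · rw [← Nat.succ_eq_add_one, heq, Nat.div_self hk, Nat.mod_self, add_comm, h]

theorem IsBallChain.eventually_exists_walks {δ : ℝ} (hδ : 0 < δ) {N : ℕ} {y : ℕ → X}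
    (h : IsBallChain ε N y) {A : Set X} (hA : A.Finite) :
    ∀ᶠ k in atTop, ∃ w : ℕ → ℕ → X, (∀ i, w i 0 = y i) ∧ ∀ i < N, w i k = y (i + 1) ∧
      (∀ j, w i j ∈ ballComponent (y i) ε) ∧ (∀ j, w i (j + 1) ∈ ballComponent (w i j) δ) ∧
      ∀ a ∈ A ∩ ballComponent (y i) ε, ∃ j < k, w i j = a := by
  filter_upwards [(finite_lt_nat N).eventually_all.2 fun i hi =>
    eventually_exists_walk_of_isPreconnected isPreconnected_ballComponent hA hδ
      (self_mem_ballComponent h.nonneg _) (h.succ_mem i hi)] with k hk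
  have : Nonempty X := ⟨y 0⟩
  choose! w hw0 hwk hwC hwδ hwA using hk
  refine ⟨fun i => if i < N then w i else fun _ => y i, fun i => ?_, fun i hi => ?_⟩
  · by_cases hi : i < N
    · simp only [if_pos hi, hw0 i hi]
    · simp only [if_neg hi]
  · simp only [if_pos hi]
    exact ⟨hwk i hi, hwC i hi, hwδ i hi, hwA i hi⟩

theorem IsBallChain.exists_refinement [CompactSpace X] {δ : ℝ} (hδ : 0 < δ) {N : ℕ} {y : ℕ → X}
    (h : IsBallChain ε N y) :
    ∃ k > 0, ∃ y' : ℕ → X, IsBallChain δ (N * k) y' ∧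
      ∀ j ≤ N * k, dist (y (j / k)) (y' j) ≤ ε := by
  obtain ⟨A, hAfin, hA⟩ := exists_finite_ballComponent_cover (X := X) hδ
  obtain ⟨k, ⟨w, hw0, hw⟩, hk⟩ :=
    ((h.eventually_exists_walks hδ hAfin).and (eventually_gt_atTop 0)).exists
  choose hwk hwC hwδ hwA using hw
  have hdiv : ∀ {j}, j < N * k → j / k < N := fun hj =>
    Nat.div_lt_of_lt_mul (hj.trans_eq (mul_comm N k))
  refine ⟨k, hk, fun j => w (j / k) (j % k), ⟨fun j hj => ?_, fun x => ?_⟩, fun j hj => ?_⟩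
  · rw [apply_succ_div_mod (w := w) hk (by rw [hwk _ (hdiv hj), hw0])]
    exact hwδ _ (hdiv hj) _
  · obtain ⟨a, haA, hxa⟩ := hA x
    obtain ⟨i, hi, hai⟩ := h.exists_mem a
    obtain ⟨j, hj, rfl⟩ := hwA i hi a ⟨haA, hai⟩
    refine ⟨j + k * i, by nlinarith, ?_⟩
    rwa [Nat.add_mul_div_left _ _ hk, Nat.add_mul_mod_self_left, Nat.div_eq_of_lt hj,
      Nat.mod_eq_of_lt hj, zero_add]
  · obtain hj | rfl := hj.lt_or_eq
    · rw [dist_comm]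
      exact dist_le_of_mem_ballComponent (hwC _ (hdiv hj) _)
    · simpa only [Nat.mul_div_cancel _ hk, Nat.mul_mod_left, hw0, dist_self] using h.nonneg

end BallComponent

section LimitCurve

variable {X : Type*} [MetricSpace X]

theorem dist_apply_floor_le {z : ℕ → X} {M : ℕ} {δ a b : ℝ}
    (hz : ∀ i < M, dist (z i) (z (i + 1)) ≤ δ) (hδ : 0 ≤ δ) (ha : a ∈ Icc 0 (M : ℝ))
    (hb : b ∈ Icc 0 (M : ℝ)) (hab : |a - b| < 1) : dist (z ⌊a⌋₊) (z ⌊b⌋₊) ≤ δ := by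
  wlog h : a ≤ b generalizing a b
  · rw [dist_comm]
    exact this hb ha (by rwa [abs_sub_comm]) (le_of_not_ge h)
  have hb' : b ≤ a + 1 := by linarith [(abs_lt.1 hab).1]
  have hle : ⌊b⌋₊ ≤ ⌊a⌋₊ + 1 := (Nat.floor_mono hb').trans_eq (Nat.floor_add_one ha.1)
  obtain heq | heq := hle.eq_or_lt
  · rw [heq]
    exact hz _ (Nat.succ_le_iff.1 (heq.symm.trans_le (Nat.floor_le_of_le hb.2)))
  · rw [(Nat.floor_mono h).antisymm (Nat.lt_succ_iff.1 heq), dist_self]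
    exact hδ

variable {N k : ℕ → ℕ} {y : ℕ → ℕ → X} {D : ℝ}

theorem eventually_div_two_pow_lt (D : ℝ) {ε : ℝ} (hε : 0 < ε) :
    ∀ᶠ n : ℕ in atTop, D / 2 ^ n < ε :=
  (tendsto_const_nhds.div_atTop (tendsto_pow_atTop_atTop_of_one_lt one_lt_two)).eventually_lt_const
    hε

theorem exists_dist_floor_le_div_two_pow [CompleteSpace X] (hk : ∀ n, 0 < k n)
    (hN : ∀ n, N (n + 1) = N n * k n)
    (hy : ∀ n, ∀ j ≤ N (n + 1), dist (y n (j / k n)) (y (n + 1) j) ≤ D / 2 / 2 ^ n)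
    (t : unitInterval) : ∃ x, ∀ n, dist (y n ⌊N n * (t : ℝ)⌋₊) x ≤ D / 2 ^ n := by
  have hsucc : ∀ n, dist (y n ⌊N n * (t : ℝ)⌋₊) (y (n + 1) ⌊N (n + 1) * (t : ℝ)⌋₊) ≤
      D / 2 / 2 ^ n := by
    intro n
    have hfloor : ⌊N (n + 1) * (t : ℝ)⌋₊ / k n = ⌊N n * (t : ℝ)⌋₊ := by
      rw [← Nat.floor_div_natCast, hN, Nat.cast_mul, mul_right_comm,
        mul_div_cancel_right₀ _ (Nat.cast_ne_zero.2 (hk n).ne')]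
    rw [← hfloor]
    exact hy n _ (Nat.floor_le_of_le (mul_le_of_le_one_right (Nat.cast_nonneg _) t.2.2))
  obtain ⟨x, hx⟩ := cauchySeq_tendsto_of_complete (cauchySeq_of_le_geometric_two hsucc)
  exact ⟨x, dist_le_of_le_geometric_two_of_tendsto hsucc hx⟩

variable {γ : unitInterval → X}
  (hγ : ∀ n (t : unitInterval), dist (y n ⌊N n * (t : ℝ)⌋₊) (γ t) ≤ D / 2 ^ n)
include hγ

theorem continuous_of_dist_floor_le (hN : ∀ n, 0 < N n)
    (hy : ∀ n, ∀ i < N n, dist (y n i) (y n (i + 1)) ≤ D / 2 ^ n) : Continuous γ := by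
  refine Metric.continuous_iff'.2 fun t ε hε => ?_
  obtain ⟨n, hn⟩ := (eventually_div_two_pow_lt D (div_pos hε three_pos)).exists
  have hNn : (0 : ℝ) < N n := Nat.cast_pos.2 (hN n)
  have hmem : ∀ s : unitInterval, N n * (s : ℝ) ∈ Icc 0 (N n : ℝ) := fun s =>
    ⟨mul_nonneg hNn.le s.2.1, mul_le_of_le_one_right hNn.le s.2.2⟩
  have hlim : Tendsto (fun s : unitInterval => |N n * (s : ℝ) - N n * t|) (𝓝 t) (𝓝 0) :=
    Continuous.tendsto' (by fun_prop) _ _ (by simp)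
  filter_upwards [hlim.eventually_lt_const one_pos] with s hs
  have h₁ := dist_apply_floor_le (hy n) (dist_nonneg.trans (hγ n t)) (hmem s) (hmem t) hs
  have h₂ := hγ n s
  rw [dist_comm] at h₂
  linarith [dist_triangle4 (γ s) (y n ⌊N n * (s : ℝ)⌋₊) (y n ⌊N n * (t : ℝ)⌋₊) (γ t), hγ n t]

theorem denseRange_of_dist_floor_le (hy : ∀ n x, ∃ i < N n, dist x (y n i) ≤ D / 2 ^ n) :
    DenseRange γ := by
  refine Metric.denseRange_iff.2 fun x ε hε => ?_
  obtain ⟨n, hn⟩ := (eventually_div_two_pow_lt D (half_pos hε)).exists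
  obtain ⟨i, hi, hxi⟩ := hy n x
  have hNn : (0 : ℝ) < N n := Nat.cast_pos.2 (i.zero_le.trans_lt hi)
  have ht : (i / N n : ℝ) ∈ unitInterval :=
    ⟨by positivity, div_le_one_of_le₀ (Nat.cast_le.2 hi.le) hNn.le⟩
  have hγt := hγ n ⟨_, ht⟩
  rw [mul_div_cancel₀ _ hNn.ne', Nat.floor_natCast] at hγt
  exact ⟨⟨_, ht⟩, by linarith [dist_triangle x (y n i) (γ ⟨_, ht⟩)]⟩

end LimitCurve

section HahnMazurkiewicz

theorem exists_isBallChain_one {X : Type*} [PseudoMetricSpace X] [BoundedSpace X]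
    [ConnectedSpace X] : ∃ D > 0, ∃ y : ℕ → X, IsBallChain (D / 2) 1 y := by
  obtain ⟨x⟩ := (inferInstance : Nonempty X)
  obtain ⟨R, hR, hball⟩ := (BoundedSpace.bounded_univ (α := X)).subset_closedBall_lt 0 x
  have huniv : ballComponent x R = univ := by
    rw [ballComponent, univ_subset_iff.1 hball, connectedComponentIn_univ,
      PreconnectedSpace.connectedComponent_eq_univ]
  exact ⟨2 * R, by positivity, fun _ => x, by simp [huniv], by simp [huniv]⟩

variable {X : Type*} [MetricSpace X] [CompactSpace X] [LocallyConnectedSpace X]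

theorem exists_refining_isBallChain {D : ℝ} (hD : 0 < D) {y₀ : ℕ → X}
    (h₀ : IsBallChain (D / 2) 1 y₀) :
    ∃ (N k : ℕ → ℕ) (y : ℕ → ℕ → X), (∀ n, 0 < k n) ∧ (∀ n, N (n + 1) = N n * k n) ∧
      (∀ n, IsBallChain (D / 2 / 2 ^ n) (N n) (y n)) ∧
      ∀ n, ∀ j ≤ N (n + 1), dist (y n (j / k n)) (y (n + 1) j) ≤ D / 2 / 2 ^ n := by
  let Chain : ℕ → Type _ := fun n => {c : ℕ × (ℕ → X) // IsBallChain (D / 2 / 2 ^ n) c.1 c.2}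
  have hstep : ∀ n (c : Chain n), ∃ k > 0, ∃ c' : Chain (n + 1), c'.1.1 = c.1.1 * k ∧
      ∀ j ≤ c'.1.1, dist (c.1.2 (j / k)) (c'.1.2 j) ≤ D / 2 / 2 ^ n := by
    rintro n ⟨⟨N, y⟩, hc⟩
    obtain ⟨k, hk, y', hy', hdist⟩ :=
      hc.exists_refinement (show 0 < D / 2 / 2 ^ (n + 1) by positivity)
    exact ⟨k, hk, ⟨(N * k, y'), hy'⟩, rfl, hdist⟩
  choose k hk next hN hdist using hstep
  let c : ∀ n, Chain n := fun n =>
    Nat.rec ⟨(1, y₀), by simpa using h₀⟩ (fun n c => next n c) n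
  exact ⟨fun n => (c n).1.1, fun n => k n (c n), fun n => (c n).1.2, fun n => hk n (c n),
    fun n => hN n (c n), fun n => (c n).2, fun n => hdist n (c n)⟩

theorem exists_continuous_surjective_unitInterval [ConnectedSpace X] :
    ∃ γ : unitInterval → X, Continuous γ ∧ Function.Surjective γ := by
  obtain ⟨D, hD, y₀, h₀⟩ := exists_isBallChain_one (X := X)
  obtain ⟨N, k, y, hk, hN, hchain, hrefine⟩ := exists_refining_isBallChain hD h₀
  have hle : ∀ n, D / 2 / 2 ^ n ≤ D / 2 ^ n := fun n => by gcongr; exact half_le_self hD.le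
  choose γ hγ using exists_dist_floor_le_div_two_pow hk hN hrefine
  have hcont : Continuous γ := continuous_of_dist_floor_le (fun n t => hγ t n)
    (fun n => (Nat.zero_le _).trans_lt ((hchain n).exists_mem (y 0 0)).choose_spec.1)
    fun n i hi => by
      rw [dist_comm]
      exact (dist_le_of_mem_ballComponent ((hchain n).succ_mem i hi)).trans (hle n)
  have hdense : DenseRange γ := denseRange_of_dist_floor_le (fun n t => hγ t n) fun n x =>
    ((hchain n).exists_mem x).imp fun i hi =>
      ⟨hi.1, (dist_le_of_mem_ballComponent hi.2).trans (hle n)⟩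
  refine ⟨γ, hcont, range_eq_univ.1 ?_⟩
  rw [← (isCompact_range hcont).isClosed.closure_eq, hdense.closure_range]

theorem exists_path_surjective [ConnectedSpace X] (a b : X) :
    ∃ γ : Path a b, Function.Surjective γ := by
  obtain ⟨g, hg, hgs⟩ := exists_continuous_surjective_unitInterval (X := X)
  have : PathConnectedSpace unitInterval := isPathConnected_iff_pathConnectedSpace.1
    ((convex_Icc (0 : ℝ) 1).isPathConnected ⟨0, by simp⟩)
  have : PathConnectedSpace X := hgs.pathConnectedSpace hg
  let γ : Path (g 0) (g 1) := ⟨⟨g, hg⟩, rfl, rfl⟩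
  let γ' := ((PathConnectedSpace.somePath a (g 0)).trans γ).trans
    (PathConnectedSpace.somePath (g 1) b)
  refine ⟨γ', range_eq_univ.1 (univ_subset_iff.1 ?_)⟩
  rw [Path.trans_range, Path.trans_range, ← hgs.range_eq]
  exact subset_union_of_subset_left subset_union_right _

end HahnMazurkiewicz

section UncountableSets

variable {α : Type*} [LinearOrder α] [TopologicalSpace α] [OrderTopology α]
  [SecondCountableTopology α] {T : Set α}

theorem countable_setOf_exists_countable_inter_Ioo (T : Set α) :
    {x ∈ T | ∃ y > x, (T ∩ Ioo x y).Countable}.Countable := by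
  set S := {x ∈ T | ∃ y > x, (T ∩ Ioo x y).Countable}
  choose! y hy hcount using fun x (hx : x ∈ S) => hx.2
  obtain ⟨D, hDS, hD, hDU⟩ := TopologicalSpace.isOpen_biUnion_countable S
    (fun x => Ioo x (y x)) fun _ _ => isOpen_Ioo
  set O := ⋃ x ∈ S, Ioo x (y x)
  have hTO : (T ∩ O).Countable := by
    rw [← hDU, inter_iUnion₂]
    exact hD.biUnion fun x hx => hcount x (hDS hx)
  have hSO : (S \ O).Countable := by
    refine PairwiseDisjoint.countable_of_Ioo (y := y) (fun a ha b hb hab => ?_)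
      fun x hx => hy x hx.1
    have hsep : ∀ {a b}, a ∈ S \ O → b ∈ S \ O → a < b → Disjoint (Ioo a (y a)) (Ioo b (y b)) :=
      fun {a b} ha hb hab => disjoint_left.2 fun z hza hzb =>
        hb.2 (mem_iUnion₂.2 ⟨a, ha.1, hab, hzb.1.trans hza.2⟩)
    exact hab.lt_or_gt.elim (hsep ha hb) fun h => (hsep hb ha h).symm
  refine (hTO.union hSO).mono fun x hx => ?_
  by_cases hxO : x ∈ O
  · exact Or.inl ⟨hx.1, hxO⟩
  · exact Or.inr ⟨hx, hxO⟩

theorem exists_strictMono_rat_of_not_countable (hT : ¬ T.Countable) :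
    ∃ e : ℚ → α, StrictMono e ∧ ∀ q, e q ∈ T := by
  have hS := countable_setOf_exists_countable_inter_Ioo T
  set S := {x ∈ T | ∃ y > x, (T ∩ Ioo x y).Countable}
  have : DenselyOrdered ↥(T \ S) := ⟨fun x y hxy => by
    have hxy' : ¬ (T ∩ Ioo (x : α) y).Countable := fun h => x.2.2 ⟨x.2.1, y, hxy, h⟩
    obtain ⟨z, hz, hzS⟩ := not_subset.1 fun h => hxy' (hS.mono h)
    exact ⟨⟨z, hz.1, hzS⟩, hz.2⟩⟩
  have : Nontrivial ↥(T \ S) := by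
    rw [nontrivial_coe_sort, ← not_subsingleton_iff]
    exact fun h => hT ((hS.union h.countable).mono (by simp))
  obtain ⟨e⟩ := Order.embedding_from_countable_to_dense ℚ ↥(T \ S)
  exact ⟨fun q => e q, fun x y h => e.strictMono h, fun q => (e q).2.1⟩

end UncountableSets

section FullSupport

open MeasureTheory

theorem exists_isProbabilityMeasure_isOpenPosMeasure (X : Type*) [TopologicalSpace X]
    [TopologicalSpace.SeparableSpace X] [Nonempty X] [MeasurableSpace X] [OpensMeasurableSpace X] :
    ∃ μ : Measure X, IsProbabilityMeasure μ ∧ μ.IsOpenPosMeasure := by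
  obtain ⟨p, hp0, hp1⟩ := exists_between (zero_lt_one (α := unitInterval))
  let d := TopologicalSpace.denseSeq X
  have hd : Measurable d := measurable_from_nat
  refine ⟨(ProbabilityTheory.geometricMeasure p).map d,
    Measure.isProbabilityMeasure_map hd.aemeasurable, ⟨fun U hU hne => ?_⟩⟩
  obtain ⟨n, hn⟩ := (TopologicalSpace.denseRange_denseSeq X).exists_mem_open hU hne
  rw [Measure.map_apply hd hU.measurableSet]
  refine ne_of_gt (lt_of_lt_of_le ?_ (measure_mono (singleton_subset_iff.2 hn)))
  rw [ProbabilityTheory.geometricMeasure_singleton hp0.ne']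
  exact ENNReal.ofReal_pos.2 (ProbabilityTheory.geometricMeasure_pos hp0.ne' hp1.ne n)

theorem measureReal_lt_of_closure_subset {X : Type*} [TopologicalSpace X] [PreconnectedSpace X]
    [MeasurableSpace X] [OpensMeasurableSpace X] {μ : Measure X} [IsFiniteMeasure μ]
    [μ.IsOpenPosMeasure] {U V : Set X} (hU : U.Nonempty) (hUV : closure U ⊆ V) (hV : IsOpen V)
    (hV' : V ≠ univ) : μ.real U < μ.real V := by
  have hne : (V \ closure U).Nonempty := by
    rw [sdiff_nonempty]
    intro h
    have hV_clopen : IsClopen V := ⟨h.antisymm hUV ▸ isClosed_closure, hV⟩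
    exact hV' (hV_clopen.eq_univ (hU.mono (subset_closure.trans hUV)))
  have hopen : IsOpen (V \ closure U) := hV.sdiff isClosed_closure
  calc μ.real U < μ.real U + μ.real (V \ closure U) :=
        lt_add_of_pos_right _ (ENNReal.toReal_pos (hopen.measure_ne_zero μ hne) (by finiteness))
    _ = μ.real (U ∪ V \ closure U) := (measureReal_union
        (disjoint_sdiff_right.mono_left subset_closure) hopen.measurableSet).symm
    _ ≤ μ.real V := measureReal_mono (union_subset (subset_closure.trans hUV) sdiff_subset)

end FullSupport

section CutPoints

variable {X : Type*} [TopologicalSpace X]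

theorem closure_connectedComponentIn_inter_subset (F : Set X) (a : X) :
    closure (connectedComponentIn F a) ∩ F ⊆ connectedComponentIn F a := by
  rintro x ⟨hx, hxF⟩
  have ha : a ∈ F := connectedComponentIn_nonempty_iff.1 (closure_nonempty_iff.1 ⟨x, hx⟩)
  have hpre : IsPreconnected (insert x (connectedComponentIn F a)) :=
    isPreconnected_connectedComponentIn.subset_closure (subset_insert _ _)
      (insert_subset hx subset_closure)
  exact hpre.subset_connectedComponentIn (mem_insert_of_mem _ (mem_connectedComponentIn ha))
    (insert_subset hxF (connectedComponentIn_subset _ _)) (mem_insert _ _)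

theorem closure_connectedComponentIn_compl_singleton_subset (p a : X) :
    closure (connectedComponentIn {p}ᶜ a) ⊆ insert p (connectedComponentIn {p}ᶜ a) := by
  intro x hx
  by_cases hxp : x = p
  · exact Or.inl hxp
  · exact Or.inr (closure_connectedComponentIn_inter_subset _ _ ⟨hx, hxp⟩)

/-- `p` separates `a` from `b`: both differ from `p` and lie in different components of the
complement of `p`. -/
def Separates (p a b : X) : Prop :=
  a ≠ p ∧ b ≠ p ∧ b ∉ connectedComponentIn {p}ᶜ a

theorem isCutPoint_iff_exists_separates {p : X} : IsCutPoint p ↔ ∃ a b, Separates p a b := by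
  refine ⟨fun hp => ?_, fun ⟨a, b, ha, hb, hab⟩ hp =>
    hab (hp.subset_connectedComponentIn ha subset_rfl hb)⟩
  by_contra! hcon
  refine hp (isPreconnected_of_forall_pair fun x hx y hy =>
    ⟨connectedComponentIn {p}ᶜ x, connectedComponentIn_subset _ _, mem_connectedComponentIn hx,
      ?_, isPreconnected_connectedComponentIn⟩)
  by_contra hxy
  exact hcon x y ⟨hx, hy, hxy⟩

theorem Separates.of_mem_connectedComponentIn {p a b x y : X} (h : Separates p a b)
    (hx : x ∈ connectedComponentIn {p}ᶜ a) (hy : y ∈ connectedComponentIn {p}ᶜ b) :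
    Separates p x y := by
  refine ⟨connectedComponentIn_subset _ _ hx, connectedComponentIn_subset _ _ hy, fun hxy => ?_⟩
  refine h.2.2 ?_
  rw [connectedComponentIn_eq hx, connectedComponentIn_eq hxy, ← connectedComponentIn_eq hy]
  exact mem_connectedComponentIn h.2.1

variable [T1Space X] [LocallyConnectedSpace X]

theorem isOpen_connectedComponentIn_compl_singleton (p a : X) :
    IsOpen (connectedComponentIn {p}ᶜ a) :=
  isOpen_compl_singleton.connectedComponentIn

theorem frontier_connectedComponentIn_compl_singleton_subset (p a : X) :
    frontier (connectedComponentIn {p}ᶜ a) ⊆ {p} := by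
  rw [(isOpen_connectedComponentIn_compl_singleton p a).frontier_eq]
  rintro x ⟨hx, hx'⟩
  exact (closure_connectedComponentIn_compl_singleton_subset p a hx).resolve_right hx'

theorem exists_not_countable_setOf_separates [TopologicalSpace.SeparableSpace X]
    (h : ¬{x : X | IsCutPoint x}.Countable) : ∃ a b : X, ¬{p | Separates p a b}.Countable := by
  by_contra! hcount
  obtain ⟨D, hD, hdense⟩ := TopologicalSpace.exists_countable_dense X
  refine h ((hD.biUnion fun a _ => hD.biUnion fun b _ => hcount a b).mono fun p hp => ?_)
  obtain ⟨x, y, hxy⟩ := isCutPoint_iff_exists_separates.1 hp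
  obtain ⟨a, hax, ha⟩ := hdense.inter_open_nonempty _
    (isOpen_connectedComponentIn_compl_singleton p x) ⟨x, mem_connectedComponentIn hxy.1⟩
  obtain ⟨b, hby, hb⟩ := hdense.inter_open_nonempty _
    (isOpen_connectedComponentIn_compl_singleton p y) ⟨y, mem_connectedComponentIn hxy.2.1⟩
  exact mem_biUnion ha (mem_biUnion hb (hxy.of_mem_connectedComponentIn hax hby))

variable [ConnectedSpace X]

theorem mem_closure_connectedComponentIn_compl_singleton {p a : X} (ha : a ≠ p) :
    p ∈ closure (connectedComponentIn {p}ᶜ a) := by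
  by_contra hp
  have hclopen : IsClopen (connectedComponentIn {p}ᶜ a) :=
    ⟨closure_subset_iff_isClosed.1 fun x hx =>
      (closure_connectedComponentIn_compl_singleton_subset p a hx).resolve_left
        fun h => hp (h ▸ hx), isOpen_connectedComponentIn_compl_singleton p a⟩
  have huniv := hclopen.eq_univ ⟨a, mem_connectedComponentIn ha⟩
  exact hp (subset_closure (huniv ▸ mem_univ p))

theorem isPreconnected_compl_connectedComponentIn_compl_singleton (p a : X) :
    IsPreconnected (connectedComponentIn {p}ᶜ a)ᶜ := by
  have hp : p ∈ (connectedComponentIn {p}ᶜ a)ᶜ := fun h => connectedComponentIn_subset _ _ h rfl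
  refine isPreconnected_of_forall p fun x hx => ?_
  by_cases hxp : x = p
  · exact ⟨{p}, singleton_subset_iff.2 hp, rfl, hxp, isPreconnected_singleton⟩
  refine ⟨closure (connectedComponentIn {p}ᶜ x), fun y hy => ?_,
    mem_closure_connectedComponentIn_compl_singleton hxp,
    subset_closure (mem_connectedComponentIn hxp), isPreconnected_connectedComponentIn.closure⟩
  rcases closure_connectedComponentIn_compl_singleton_subset p x hy with rfl | hyx
  · exact hp
  · intro hya
    rw [mem_compl_iff, connectedComponentIn_eq hya, ← connectedComponentIn_eq hyx] at hx
    exact hx (mem_connectedComponentIn hxp)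

theorem closure_connectedComponentIn_subset_of_notMem {a p q : X} (hpq : p ≠ q) (ha : a ≠ p)
    (hq : q ∉ connectedComponentIn {p}ᶜ a) :
    closure (connectedComponentIn {p}ᶜ a) ⊆ connectedComponentIn {q}ᶜ a := by
  have hsub : connectedComponentIn {p}ᶜ a ⊆ connectedComponentIn {q}ᶜ a :=
    isPreconnected_connectedComponentIn.subset_connectedComponentIn
      (mem_connectedComponentIn ha) fun x hx hxq => hq (hxq ▸ hx)
  have hp := closure_connectedComponentIn_compl_singleton_subset q a
    (closure_mono hsub (mem_closure_connectedComponentIn_compl_singleton ha))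
  exact (closure_connectedComponentIn_compl_singleton_subset p a).trans
    (insert_subset (hp.resolve_left hpq) hsub)

theorem Separates.closure_connectedComponentIn_subset_or {a b p q : X} (hp : Separates p a b)
    (hq : Separates q a b) (hpq : p ≠ q) :
    closure (connectedComponentIn {p}ᶜ a) ⊆ connectedComponentIn {q}ᶜ a ∨
      closure (connectedComponentIn {q}ᶜ a) ⊆ connectedComponentIn {p}ᶜ a := by
  by_cases hqp : q ∈ connectedComponentIn {p}ᶜ a
  swap
  · exact Or.inl (closure_connectedComponentIn_subset_of_notMem hpq hp.1 hqp)
  by_cases hpq' : p ∈ connectedComponentIn {q}ᶜ a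
  swap
  · exact Or.inr (closure_connectedComponentIn_subset_of_notMem hpq.symm hq.1 hpq')
  -- The complement of the component at `p` is a connected set that joins `p` to `b` and misses `q`.
  have hb : b ∈ connectedComponentIn {q}ᶜ p :=
    (isPreconnected_compl_connectedComponentIn_compl_singleton p a).subset_connectedComponentIn
      (fun h => connectedComponentIn_subset _ _ h rfl)
      (fun x hx (hxq : x = q) => hx (hxq ▸ hqp)) hp.2.2
  exact absurd (connectedComponentIn_eq hpq' ▸ hb) hq.2.2

theorem exists_rat_chain_of_not_countable_setOf_separates [TopologicalSpace.SeparableSpace X]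
    {a b : X} (h : ¬{p | Separates p a b}.Countable) :
    ∃ p : ℚ → X, (∀ q, Separates (p q) a b) ∧ ∀ q r, q < r →
      closure (connectedComponentIn {p q}ᶜ a) ⊆ connectedComponentIn {p r}ᶜ a := by
  borelize X
  have : Nonempty X := ⟨a⟩
  obtain ⟨μ, _, _⟩ := exists_isProbabilityMeasure_isOpenPosMeasure X
  let mass (p : X) : ℝ := μ.real (connectedComponentIn {p}ᶜ a)
  have hmass : ∀ p q, Separates p a b → Separates q a b →
      closure (connectedComponentIn {p}ᶜ a) ⊆ connectedComponentIn {q}ᶜ a → mass p < mass q :=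
    fun p q hp hq hpq => measureReal_lt_of_closure_subset ⟨a, mem_connectedComponentIn hp.1⟩ hpq
      (isOpen_connectedComponentIn_compl_singleton q a) fun hu => hq.2.2 (hu ▸ mem_univ b)
  have hinj : InjOn mass {p | Separates p a b} := fun p hp q hq hpq => by
    by_contra hne
    rcases hp.closure_connectedComponentIn_subset_or hq hne with hsub | hsub
    · exact (hmass p q hp hq hsub).ne hpq
    · exact (hmass q p hq hp hsub).ne' hpq
  obtain ⟨e, he, hmem⟩ := exists_strictMono_rat_of_not_countable
    (T := mass '' {p | Separates p a b}) fun hc =>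
      h (countable_of_injective_of_countable_image hinj hc)
  choose p hp hpe using hmem
  refine ⟨p, hp, fun q r hqr => ?_⟩
  have hlt : mass (p q) < mass (p r) := by
    rw [hpe, hpe]
    exact he hqr
  refine ((hp q).closure_connectedComponentIn_subset_or (hp r) fun heq =>
    hlt.ne (congrArg mass heq)).resolve_right fun hsub => ?_
  exact (hmass _ _ (hp r) (hp q) hsub).not_gt hlt

end CutPoints

section ThinCuts

variable {X : Type*}

/-- Any two levels of `φ` are separated by an open set whose frontier has at most one point. -/
def HasThinCuts [TopologicalSpace X] (φ : X → ℝ) : Prop :=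
  ∀ ⦃s t⦄, s < t → ∃ U, IsOpen U ∧ (frontier U).Subsingleton ∧ {x | φ x ≤ s} ⊆ U ∧
    closure U ⊆ {x | φ x < t}

variable [TopologicalSpace X]

theorem HasThinCuts.neg {φ : X → ℝ} (hφ : HasThinCuts φ) : HasThinCuts (-φ) := by
  intro s t hst
  obtain ⟨U, hU, hfr, hsU, hUt⟩ := hφ (neg_lt_neg hst)
  refine ⟨(closure U)ᶜ, isClosed_closure.isOpen_compl, ?_, fun x (hx : -φ x ≤ s) hxU => ?_,
    fun x hx => ?_⟩
  · rw [frontier_compl]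
    exact hfr.anti frontier_closure_subset
  · exact (neg_le.1 hx).not_gt (hUt hxU)
  · rw [closure_compl] at hx
    have hxU : x ∉ U := fun h => hx (hU.subset_interior_closure h)
    exact neg_lt.1 (not_le.1 fun h : φ x ≤ -t => hxU (hsU h))

theorem exists_continuous_forall_mem_le_of_rat_chain {U : ℚ → Set X} (hU : ∀ q, IsOpen (U q))
    (hchain : ∀ q r, q < r → closure (U q) ⊆ U r) (hmem : ∀ x, ∃ q, x ∈ U q)
    (hnotMem : ∀ x, ∃ q, x ∉ U q) :
    ∃ φ : X → ℝ, Continuous φ ∧ (∀ q, ∀ x ∈ U q, φ x ≤ q) ∧ ∀ q, ∀ x ∉ U q, (q : ℝ) ≤ φ x := by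
  let φ (x : X) : ℝ := sInf ((↑) '' {q : ℚ | x ∈ U q})
  have hlb : ∀ {x q}, x ∉ U q → (q : ℝ) ∈ lowerBounds ((↑) '' {q : ℚ | x ∈ U q}) := by
    rintro x q hx _ ⟨r, hr, rfl⟩
    by_contra! hrq
    exact hx (hchain r q (Rat.cast_lt.1 hrq) (subset_closure hr))
  have hle : ∀ q, ∀ x ∈ U q, φ x ≤ q := fun q x hx => by
    obtain ⟨r, hr⟩ := hnotMem x
    exact csInf_le ⟨r, hlb hr⟩ ⟨q, hx, rfl⟩
  have hge : ∀ q, ∀ x ∉ U q, (q : ℝ) ≤ φ x := fun q x hx =>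
    le_csInf (Nonempty.image _ (hmem x)) (hlb hx)
  refine ⟨φ, continuous_iff_continuousAt.2 fun x =>
    tendsto_order.2 ⟨fun s hs => ?_, fun t ht => ?_⟩, hle, hge⟩
  · obtain ⟨r, hsr, hr⟩ := exists_rat_btwn hs
    obtain ⟨q, hsq, hqr⟩ := exists_rat_btwn hsr
    have hx : x ∉ closure (U q) := fun h =>
      hr.not_ge (hle r x (hchain q r (Rat.cast_lt.1 hqr) h))
    filter_upwards [isClosed_closure.isOpen_compl.mem_nhds hx] with y hy
    exact hsq.trans_le (hge q y fun h => hy (subset_closure h))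
  · obtain ⟨q, hq, hqt⟩ := exists_rat_btwn ht
    have hx : x ∈ U q := by
      by_contra h
      exact hq.not_ge (hge q x h)
    filter_upwards [(hU q).mem_nhds hx] with y hy
    exact (hle q y hy).trans_lt hqt

theorem hasThinCuts_of_rat_chain {φ : X → ℝ} {U : ℚ → Set X} (hU : ∀ q, IsOpen (U q))
    (hfr : ∀ q, (frontier (U q)).Subsingleton) (hchain : ∀ q r, q < r → closure (U q) ⊆ U r)
    (hle : ∀ q, ∀ x ∈ U q, φ x ≤ q) (hge : ∀ q, ∀ x ∉ U q, (q : ℝ) ≤ φ x) : HasThinCuts φ := by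
  intro s t hst
  obtain ⟨r, hsr, hrt⟩ := exists_rat_btwn hst
  obtain ⟨q, hsq, hqr⟩ := exists_rat_btwn hsr
  refine ⟨U q, hU q, hfr q, fun x hx => ?_, fun x hx =>
    (hle r x (hchain q r (Rat.cast_lt.1 hqr) hx)).trans_lt hrt⟩
  by_contra h
  exact hsq.not_ge ((hge q x h).trans hx)

theorem exists_continuous_hasThinCuts_of_rat_chain {a b : X} {U : ℚ → Set X}
    (hU : ∀ q, IsOpen (U q)) (hfr : ∀ q, (frontier (U q)).Subsingleton)
    (hchain : ∀ q r, q < r → closure (U q) ⊆ U r) (ha : ∀ q, a ∈ U q) (hb : ∀ q, b ∉ U q) :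
    ∃ φ : X → ℝ, Continuous φ ∧ HasThinCuts φ ∧ (∀ x, φ x ∈ Icc 0 1) ∧ φ a = 0 ∧ φ b = 1 := by
  let V (q : ℚ) : Set X := if q ≤ 0 then ∅ else if q < 1 then U q else univ
  have hV : ∀ q, V q = ∅ ∨ V q = U q ∨ V q = univ := fun q => by grind
  have hV_open : ∀ q, IsOpen (V q) := fun q => by
    rcases hV q with h | h | h <;> simp [h, hU q]
  have hV_fr : ∀ q, (frontier (V q)).Subsingleton := fun q => by
    rcases hV q with h | h | h <;> simp [h, hfr q]
  have hV_chain : ∀ q r, q < r → closure (V q) ⊆ V r := fun q r hqr => by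
    rcases le_or_gt q 0 with hq | hq
    · simp [V, hq]
    rcases le_or_gt 1 r with hr | hr
    · simp [V, (zero_lt_one.trans_le hr).not_ge, hr.not_gt]
    simpa [V, hq.not_ge, hr, (hq.trans hqr).not_ge, hqr.trans hr] using hchain q r hqr
  have hV_zero : ∀ x, x ∉ V 0 := by simp [V]
  have hV_one : ∀ x, x ∈ V 1 := by simp [V]
  obtain ⟨φ, hφ, hle, hge⟩ := exists_continuous_forall_mem_le_of_rat_chain hV_open hV_chain
    (fun x => ⟨1, hV_one x⟩) fun x => ⟨0, hV_zero x⟩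
  have hIcc : ∀ x, φ x ∈ Icc 0 1 := fun x =>
    ⟨by simpa using hge 0 x (hV_zero x), by simpa using hle 1 x (hV_one x)⟩
  refine ⟨φ, hφ, hasThinCuts_of_rat_chain hV_open hV_fr hV_chain hle hge, hIcc, ?_, ?_⟩
  · refine le_antisymm (le_of_forall_gt_imp_ge_of_dense fun t ht => ?_) (hIcc a).1
    obtain ⟨q, hq, hqt⟩ := exists_rat_btwn ht
    have haV : a ∈ V q := by
      have : 0 < q := by exact_mod_cast hq
      grind
    exact (hle q a haV).trans hqt.le
  · refine le_antisymm (hIcc b).2 (le_of_forall_lt_imp_le_of_dense fun t ht => ?_)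
    obtain ⟨q, htq, hq⟩ := exists_rat_btwn ht
    have hbV : b ∉ V q := by
      have : q < 1 := by exact_mod_cast hq
      grind
    exact htq.le.trans (hge q b hbV)

theorem exists_continuous_hasThinCuts_of_not_countable_isCutPoint [T1Space X]
    [LocallyConnectedSpace X] [ConnectedSpace X] [TopologicalSpace.SeparableSpace X]
    (h : ¬{x : X | IsCutPoint x}.Countable) :
    ∃ φ : X → ℝ, Continuous φ ∧ HasThinCuts φ ∧ range φ = Icc 0 1 := by
  obtain ⟨a, b, hab⟩ := exists_not_countable_setOf_separates h
  obtain ⟨p, hp, hchain⟩ := exists_rat_chain_of_not_countable_setOf_separates hab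
  obtain ⟨φ, hφ, hthin, hIcc, hφa, hφb⟩ := exists_continuous_hasThinCuts_of_rat_chain
    (fun q => isOpen_connectedComponentIn_compl_singleton (p q) a)
    (fun q => subsingleton_singleton.anti
      (frontier_connectedComponentIn_compl_singleton_subset (p q) a))
    hchain (fun q => mem_connectedComponentIn (hp q).1) fun q => (hp q).2.2
  refine ⟨φ, hφ, hthin, (range_subset_iff.2 hIcc).antisymm ?_⟩
  have := (isPreconnected_range hφ).Icc_subset (mem_range_self a) (mem_range_self b)
  rwa [hφa, hφb] at this

end ThinCuts

section Levels

variable {X : Type*} [TopologicalSpace X] {φ : X → ℝ} {t : ℝ} {p q : X}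

/-- `p` is the only point, if any, at which the level `t` of `φ` is approached from below. The gate
from above is expressed as `IsGate (-φ) (-t) p`. -/
def IsGate (φ : X → ℝ) (t : ℝ) (p : X) : Prop :=
  φ p = t ∧ closure {x | φ x < t} ⊆ insert p {x | φ x < t}

theorem IsGate.closure_setOf_lt_subset_of_neg (hq : IsGate (-φ) (-t) q) :
    closure {x | t < φ x} ⊆ insert q {x | t < φ x} := by
  simpa only [Pi.neg_apply, neg_lt_neg_iff] using hq.2

theorem inter_frontier_nonempty_of_isPreconnected {C U : Set X} (hC : IsPreconnected C)
    (hCU : (C ∩ U).Nonempty) (hCU' : (C \ U).Nonempty) : (C ∩ frontier U).Nonempty := by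
  by_contra hne
  have hfr : ∀ x ∈ C, x ∈ closure U → x ∈ interior U := fun x hx hxU => by
    by_contra hxU'
    exact hne ⟨x, hx, hxU, hxU'⟩
  obtain ⟨x, -, hx, hx'⟩ := hC (interior U) (closure U)ᶜ isOpen_interior
    isClosed_closure.isOpen_compl (fun x hx => or_iff_not_imp_right.2 fun h =>
      hfr x hx (not_not.1 h)) (hCU.imp fun x hx => ⟨hx.1, hfr x hx.1 (subset_closure hx.2)⟩)
      (hCU'.imp fun x hx => ⟨hx.1, fun h => hx.2 (interior_subset (hfr x hx.1 h))⟩)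
  exact hx' (subset_closure (interior_subset hx))

theorem HasThinCuts.subsingleton_closure_inter [T2Space X] [LocallyConnectedSpace X]
    (hφ : HasThinCuts φ) (t : ℝ) : (closure {x | φ x < t} ∩ {x | φ x = t}).Subsingleton := by
  rintro x ⟨hx, hxt⟩ y ⟨hy, hyt⟩
  by_contra hxy
  obtain ⟨A, B, hA, hB, hxA, hyB, hAB⟩ := t2_separation hxy
  obtain ⟨V, hVA, hVo, hxV, hV⟩ := locallyConnectedSpace_iff_subsets_isOpen_isConnected.1
    inferInstance x A (hA.mem_nhds hxA)
  obtain ⟨W, hWB, hWo, hyW, hW⟩ := locallyConnectedSpace_iff_subsets_isOpen_isConnected.1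
    inferInstance y B (hB.mem_nhds hyB)
  obtain ⟨v, hvV, hv⟩ := mem_closure_iff.1 hx V hVo hxV
  obtain ⟨w, hwW, hw⟩ := mem_closure_iff.1 hy W hWo hyW
  obtain ⟨U, -, hfr, hsU, hUt⟩ := hφ (max_lt hv hw)
  have hnotMem : ∀ z, φ z = t → z ∉ U := fun z hz hzU => (hUt (subset_closure hzU)).ne hz
  obtain ⟨z, hzV, hz⟩ := inter_frontier_nonempty_of_isPreconnected hV.isPreconnected
    ⟨v, hvV, hsU (by simp)⟩ ⟨x, hxV, hnotMem x hxt⟩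
  obtain ⟨z', hzW, hz'⟩ := inter_frontier_nonempty_of_isPreconnected hW.isPreconnected
    ⟨w, hwW, hsU (by simp)⟩ ⟨y, hyW, hnotMem y hyt⟩
  exact disjoint_left.1 hAB (hVA hzV) (hWB (hfr hz hz' ▸ hzW))

theorem HasThinCuts.exists_isGate [T2Space X] [LocallyConnectedSpace X] [PreconnectedSpace X]
    (hthin : HasThinCuts φ) (hφ : Continuous φ) (ht : t ∈ range φ) : ∃ p, IsGate φ t p := by
  have hle : closure {x | φ x < t} ⊆ {x | φ x ≤ t} := closure_lt_subset_le hφ continuous_const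
  by_cases h : ∃ p ∈ closure {x | φ x < t}, φ p = t
  · obtain ⟨p, hp, hpt⟩ := h
    refine ⟨p, hpt, fun x hx => ?_⟩
    rcases eq_or_lt_of_le (α := ℝ) (hle hx) with hxt | hxt
    · exact Or.inl (hthin.subsingleton_closure_inter t ⟨hx, hxt⟩ ⟨hp, hpt⟩)
    · exact Or.inr hxt
  · push Not at h
    obtain ⟨p, hp⟩ := ht
    have hsub : closure {x | φ x < t} ⊆ {x | φ x < t} := fun x hx =>
      lt_of_le_of_ne (α := ℝ) (hle hx) (h x hx)
    exact ⟨p, hp, hsub.trans (subset_insert _ _)⟩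

theorem IsGate.comap_nhdsLT_le [CompactSpace X] (hp : IsGate φ t p) (hφ : Continuous φ) :
    comap φ (𝓝[<] t) ≤ 𝓝 p := by
  refine le_nhds_of_unique_clusterPt fun x hx => ?_
  have hφx : φ x = t := eq_of_nhds_neBot
    ((hx.map hφ.continuousAt tendsto_comap).mono nhdsWithin_le_nhds)
  have hx' : x ∈ closure {x | φ x < t} :=
    mem_closure_iff_clusterPt.2
      (hx.mono (le_principal_iff.2 ⟨Iio t, self_mem_nhdsWithin, subset_rfl⟩))
  exact (hp.2 hx').resolve_right hφx.not_lt

theorem IsGate.continuousWithinAt [CompactSpace X] {Y : Type*} [TopologicalSpace Y] {Γ : Y → X}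
    {y : Y} (hφ : Continuous φ) (hΓ : ContinuousAt (φ ∘ Γ) y)
    (hgate : y ∈ closure {z | φ (Γ z) < φ (Γ y)} → IsGate φ (φ (Γ y)) (Γ y)) :
    ContinuousWithinAt Γ {z | φ (Γ z) < φ (Γ y)} y := by
  by_cases hy : y ∈ closure {z | φ (Γ z) < φ (Γ y)}
  · refine Tendsto.mono_right (tendsto_comap_iff.2 ?_) ((hgate hy).comap_nhdsLT_le hφ)
    exact tendsto_nhdsWithin_iff.2 ⟨hΓ.mono_left nhdsWithin_le_nhds, self_mem_nhdsWithin⟩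
  · exact continuousWithinAt_of_notMem_closure hy

theorem continuousAt_of_isGate [CompactSpace X] {Y : Type*} [TopologicalSpace Y] {Γ : Y → X}
    {y : Y} (hφ : Continuous φ) (hΓ : ContinuousAt (φ ∘ Γ) y)
    (hfiber : ContinuousWithinAt Γ {z | φ (Γ z) = φ (Γ y)} y)
    (hlower : y ∈ closure {z | φ (Γ z) < φ (Γ y)} → IsGate φ (φ (Γ y)) (Γ y))
    (hupper : y ∈ closure {z | φ (Γ y) < φ (Γ z)} → IsGate (-φ) (-φ (Γ y)) (Γ y)) :
    ContinuousAt Γ y := by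
  have hgt : ContinuousWithinAt Γ {z | φ (Γ y) < φ (Γ z)} y := by
    simpa only [Pi.neg_apply, neg_lt_neg_iff] using
      IsGate.continuousWithinAt hφ.neg hΓ.neg (by simpa using hupper)
  have huniv : {z | φ (Γ z) < φ (Γ y)} ∪ {z | φ (Γ z) = φ (Γ y)} ∪ {z | φ (Γ y) < φ (Γ z)} =
      univ := eq_univ_of_forall fun z => or_assoc.2 (lt_trichotomy (φ (Γ z)) (φ (Γ y)))
  rw [← continuousWithinAt_univ, ← huniv]
  exact ((IsGate.continuousWithinAt hφ hΓ hlower).union hfiber).union hgt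

theorem exists_retraction_level (hφ : Continuous φ) (hp : IsGate φ t p)
    (hq : IsGate (-φ) (-t) q) :
    ∃ r : X → X, Continuous r ∧ (∀ x, φ (r x) = t) ∧ ∀ x, φ x = t → r x = x := by
  let r (x : X) : X := if φ x < t then p else if t < φ x then q else x
  have hqt : φ q = t := neg_inj.1 hq.1
  have hr_level : ∀ x, φ x = t → r x = x := fun x hx => by simp [r, hx]
  have hr_lower : EqOn r (fun _ => p) (closure {x | φ x < t}) := fun x hx => by
    rcases hp.2 hx with rfl | hxt
    · exact hr_level x hp.1
    · exact if_pos hxt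
  have hr_upper : EqOn r (fun _ => q) (closure {x | t < φ x}) := fun x hx => by
    rcases hq.closure_setOf_lt_subset_of_neg hx with rfl | hxt
    · exact hr_level x hqt
    · exact (if_neg hxt.not_gt).trans (if_pos hxt)
  refine ⟨r, continuousOn_univ.1 ?_, fun x => ?_, hr_level⟩
  · have hcover : closure {x | φ x < t} ∪ {x | φ x = t} ∪ closure {x | t < φ x} = univ := by
      refine eq_univ_of_subset (union_subset_union (union_subset_union_left _ subset_closure)
        subset_closure) (eq_univ_of_forall fun x => or_assoc.2 (lt_trichotomy (φ x) t))
    have hlevel : IsClosed {x | φ x = t} := isClosed_eq hφ continuous_const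
    rw [← hcover]
    exact ((continuousOn_const.congr hr_lower).union_of_isClosed (continuousOn_id.congr hr_level)
      isClosed_closure hlevel).union_of_isClosed (continuousOn_const.congr hr_upper)
        (isClosed_closure.union hlevel) isClosed_closure
  · rcases lt_trichotomy (φ x) t with h | h | h
    · rw [hr_lower (subset_closure h), hp.1]
    · rw [hr_level x h, h]
    · rw [hr_upper (subset_closure h), hqt]

theorem subsingleton_level_of_interior_eq_empty [T1Space X] [PreconnectedSpace X]
    (hφ : Continuous φ) (hp : IsGate φ t p) (hq : IsGate (-φ) (-t) q)
    (hint : interior {x | φ x = t} = ∅) : {x | φ x = t}.Subsingleton := by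
  obtain ⟨r, hr, hrt, hr_level⟩ := exists_retraction_level hφ hp hq
  have hrange : {x | φ x = t} = range r :=
    Subset.antisymm (fun x hx => ⟨x, hr_level x hx⟩) (range_subset_iff.2 hrt)
  have hpair : {x | φ x = t} ⊆ {p, q} := fun z hz => by
    by_contra hzpq
    rw [mem_insert_iff, mem_singleton_iff, not_or] at hzpq
    have hlower : z ∉ closure {x | φ x < t} := fun h => (hp.2 h).elim hzpq.1 fun h => h.ne hz
    have hupper : z ∉ closure {x | t < φ x} := fun h =>
      (hq.closure_setOf_lt_subset_of_neg h).elim hzpq.2 fun h => h.ne' hz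
    refine notMem_empty z (hint ▸ mem_interior_iff_mem_nhds.2 ?_)
    filter_upwards [isClosed_closure.isOpen_compl.mem_nhds hlower,
      isClosed_closure.isOpen_compl.mem_nhds hupper] with x hx hx'
    exact le_antisymm (not_lt.1 fun h => hx' (subset_closure h))
      (not_lt.1 fun h => hx (subset_closure h))
  by_contra hne
  have hconn : IsPreconnected {x | φ x = t} := hrange ▸ isPreconnected_range hr
  exact hconn.infinite_of_nontrivial (not_subsingleton_iff.1 hne) ((toFinite {p, q}).subset hpair)

end Levels

section LevelCurves

variable {X : Type*} [MetricSpace X] [CompactSpace X] [LocallyConnectedSpace X]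
  [ConnectedSpace X] {φ : X → ℝ} {t : ℝ}

theorem exists_path_range_eq_level {p q : X} (hφ : Continuous φ) (hp : IsGate φ t p)
    (hq : IsGate (-φ) (-t) q) : ∃ γ : Path p q, range γ = {x | φ x = t} := by
  obtain ⟨r, hr, hrt, hr_level⟩ := exists_retraction_level hφ hp hq
  obtain ⟨γ, hγ⟩ := exists_path_surjective p q
  refine ⟨(γ.map hr).cast (hr_level p hp.1).symm (hr_level q (neg_inj.1 hq.1)).symm, ?_⟩
  change range (r ∘ γ) = _
  rw [hγ.range_comp]
  exact Subset.antisymm (range_subset_iff.2 hrt) fun x hx => ⟨x, hr_level x hx⟩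

theorem HasThinCuts.exists_continuous_image_Icc_eq_level (hthin : HasThinCuts φ)
    (hφ : Continuous φ) (ht : t ∈ range φ) {a b : ℝ} (hab : a ≤ b)
    (hsub : a = b → interior {x | φ x = t} = ∅) :
    ∃ η : ℝ → X, Continuous η ∧ η '' Icc a b = {x | φ x = t} ∧ IsGate φ t (η a) ∧
      IsGate (-φ) (-t) (η b) := by
  obtain ⟨p, hp⟩ := hthin.exists_isGate hφ ht
  obtain ⟨q, hq⟩ : ∃ q, IsGate (-φ) (-t) q :=
    hthin.neg.exists_isGate hφ.neg (ht.imp fun x hx => congrArg Neg.neg hx)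
  rcases hab.eq_or_lt with rfl | hab
  · have hlevel := subsingleton_level_of_interior_eq_empty hφ hp hq (hsub rfl)
    have hpq : p = q := hlevel hp.1 (neg_inj.1 hq.1)
    refine ⟨fun _ => p, continuous_const, ?_, hp, hpq ▸ hq⟩
    rw [Icc_self, image_singleton]
    exact (hlevel.eq_singleton_of_mem hp.1).symm
  · obtain ⟨γ, hγ⟩ := exists_path_range_eq_level hφ hp hq
    have hpos : 0 < b - a := sub_pos.2 hab
    refine ⟨fun u => γ.extend ((u - a) / (b - a)), by fun_prop, ?_, by simpa, by simpa [hpos.ne']⟩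
    have himage : (fun u => (u - a) / (b - a)) '' Icc a b = Icc 0 1 := by
      rw [← image_image (· / (b - a)) (· - a), image_sub_const_Icc, sub_self]
      simp only [div_eq_mul_inv, image_mul_right_Icc' _ _ (inv_pos.2 hpos), zero_mul,
        mul_inv_cancel₀ hpos.ne']
    rw [← hγ, ← γ.image_extend_of_subset subset_rfl, ← image_image (fun u => γ.extend u), himage]

end LevelCurves

section FilledGraph

open Function

variable {K : ℝ≥0}

theorem exists_mem_Icc_leftLim (G : StieltjesFunction ℝ) (hbot : Tendsto G atBot atBot)
    (htop : Tendsto G atTop atTop) (u : ℝ) : ∃ t, u ∈ Icc (leftLim G t) (G t) := by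
  obtain ⟨a, ha⟩ := (hbot.eventually_le_atBot u).exists
  obtain ⟨b, hb⟩ := (htop.eventually_gt_atTop u).exists
  have hbdd : BddAbove {t | G t ≤ u} :=
    ⟨b, fun t ht => le_of_not_gt fun hbt => hb.not_ge ((G.mono hbt.le).trans ht)⟩
  refine ⟨sSup {t | G t ≤ u}, le_of_tendsto (G.mono.tendsto_leftLim _) ?_,
    ge_of_tendsto ((G.right_continuous _).mono Ioi_subset_Ici_self) ?_⟩
  · filter_upwards [self_mem_nhdsWithin] with s hs
    obtain ⟨t, ht, hst⟩ := exists_lt_of_lt_csSup ⟨a, ha⟩ hs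
    exact (G.mono hst.le).trans ht
  · filter_upwards [self_mem_nhdsWithin] with s hs
    exact le_of_not_ge fun hsu => notMem_of_csSup_lt hs hbdd hsu

theorem dist_le_mul_dist_of_mem_Icc_leftLim {G : ℝ → ℝ} (hG : Monotone G)
    (hK : AntilipschitzWith K G) {s t u v : ℝ} (hu : u ∈ Icc (leftLim G s) (G s))
    (hv : v ∈ Icc (leftLim G t) (G t)) : dist s t ≤ K * dist u v := by
  wlog hst : s ≤ t generalizing s t u v
  · simpa only [dist_comm] using this hv hu (le_of_not_ge hst)
  obtain rfl | hst := hst.eq_or_lt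
  · rw [dist_self]
    positivity
  have hlim : Tendsto (fun x => K * (G x - G s)) (𝓝[<] t) (𝓝 (K * (leftLim G t - G s))) :=
    ((hG.tendsto_leftLim t).sub_const _).const_mul _
  have hdist : Tendsto (fun x => dist s x) (𝓝[<] t) (𝓝 (dist s t)) :=
    (continuous_const.dist continuous_id).continuousWithinAt
  calc dist s t ≤ K * (leftLim G t - G s) := le_of_tendsto_of_tendsto hdist hlim <| by
        filter_upwards [Ioo_mem_nhdsLT hst] with x hx
        rw [dist_comm, ← abs_of_nonneg (sub_nonneg.2 (hG hx.1.le)), ← Real.dist_eq]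
        exact hK.le_mul_dist x s
    _ ≤ K * (v - u) := by gcongr; exacts [hv.1, hu.2]
    _ ≤ K * dist u v := by
        rw [dist_comm, Real.dist_eq]
        gcongr
        exact le_abs_self _

theorem eq_of_mem_Icc_leftLim {G : ℝ → ℝ} (hG : Monotone G) (hK : AntilipschitzWith K G)
    {s t u : ℝ} (hs : u ∈ Icc (leftLim G s) (G s)) (ht : u ∈ Icc (leftLim G t) (G t)) : s = t :=
  dist_le_zero.1 <| by simpa using dist_le_mul_dist_of_mem_Icc_leftLim hG hK hs ht

theorem continuousOn_of_isGate_leftLim {X : Type*} [TopologicalSpace X] [CompactSpace X]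
    {φ : X → ℝ} {G τ : ℝ → ℝ} {η : ℝ → ℝ → X} {I : Set ℝ} (hφ : Continuous φ) (hG : Monotone G)
    (hτ : ContinuousOn τ I) (hmem : ∀ u ∈ I, u ∈ Icc (leftLim G (τ u)) (G (τ u)))
    (hη : ∀ u ∈ I, Continuous (η (τ u))) (hlevel : ∀ u ∈ I, φ (η (τ u) u) = τ u)
    (hlower : ∀ u ∈ I, IsGate φ (τ u) (η (τ u) (leftLim G (τ u))))
    (hupper : ∀ u ∈ I, IsGate (-φ) (-τ u) (η (τ u) (G (τ u)))) :
    ContinuousOn (fun u => η (τ u) u) I := by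
  let Γ (z : I) : X := η (τ z) z
  have hφΓ (z : I) : φ (Γ z) = τ z := hlevel z z.2
  have hφΓ_comp : φ ∘ Γ = fun z : I => τ z := funext hφΓ
  suffices Continuous Γ from continuousOn_iff_continuous_domRestrict.2 this
  refine continuous_iff_continuousAt.2 fun y => ?_
  refine continuousAt_of_isGate hφ ?_ ?_ ?_ ?_
  · rw [hφΓ_comp]
    exact (continuousOn_iff_continuous_domRestrict.1 hτ).continuousAt
  · simp only [hφΓ]
    refine ((hη y y.2).comp continuous_subtype_val).continuousWithinAt.congr (fun z hz => ?_) rfl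
    exact congrArg (η · z) (hz : τ z = τ y)
  · simp only [hφΓ]
    intro hy
    have hle : {z : I | τ z < τ y} ⊆ {z | (z : ℝ) ≤ leftLim G (τ y)} := fun z hz =>
      (hmem z z.2).2.trans (hG.le_leftLim hz)
    have hy' : (y : ℝ) ≤ leftLim G (τ y) := closure_minimal hle
      (isClosed_le continuous_subtype_val continuous_const) hy
    simpa only [Γ, ← hy'.antisymm (hmem y y.2).1] using hlower y y.2
  · simp only [hφΓ]
    intro hy
    have hle : {z : I | τ y < τ z} ⊆ {z | G (τ y) ≤ (z : ℝ)} := fun z hz =>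
      (hG.le_leftLim hz).trans (hmem z z.2).1
    have hy' : G (τ y) ≤ (y : ℝ) := closure_minimal hle
      (isClosed_le continuous_const continuous_subtype_val) hy
    simpa only [Γ, hy'.antisymm (hmem y y.2).2] using hupper y y.2

theorem HasThinCuts.exists_continuousOn_parametrization {X : Type*} [MetricSpace X]
    [CompactSpace X] [LocallyConnectedSpace X] [ConnectedSpace X] {φ : X → ℝ} {G : ℝ → ℝ}
    (hthin : HasThinCuts φ) (hφ : Continuous φ) (hG : Monotone G) (hK : AntilipschitzWith K G)
    (hint : ∀ t, leftLim G t = G t → interior {x | φ x = t} = ∅) {I : Set ℝ}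
    (hI : I = ⋃ t ∈ range φ, Icc (leftLim G t) (G t)) :
    ∃ Γ : ℝ → X, ContinuousOn Γ I ∧ Γ '' I = univ ∧ LipschitzOnWith K (φ ∘ Γ) I := by
  have hX : Nonempty X := inferInstance
  choose! τ hτ hτG using fun u (hu : u ∈ I) => mem_iUnion₂.1 (hI ▸ hu)
  choose! η hη hη_image hη_lower hη_upper using fun t (ht : t ∈ range φ) =>
    hthin.exists_continuous_image_Icc_eq_level hφ ht (hG.leftLim_le (le_refl t)) (hint t)
  have hτ_lip : LipschitzOnWith K τ I := LipschitzOnWith.of_dist_le_mul fun u hu v hv =>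
    dist_le_mul_dist_of_mem_Icc_leftLim hG hK (hτG u hu) (hτG v hv)
  have hlevel : ∀ u ∈ I, φ (η (τ u) u) = τ u := fun u hu =>
    (hη_image _ (hτ u hu)).subset (mem_image_of_mem _ (hτG u hu))
  refine ⟨fun u => η (τ u) u, ?_, eq_univ_of_forall fun x => ?_, ?_⟩
  · exact continuousOn_of_isGate_leftLim hφ hG hτ_lip.continuousOn hτG (fun u hu => hη _ (hτ u hu))
      hlevel (fun u hu => hη_lower _ (hτ u hu)) (fun u hu => hη_upper _ (hτ u hu))
  · obtain ⟨u, hu, hux⟩ := (hη_image _ (mem_range_self x)).superset (rfl : φ x = φ x)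
    have huI : u ∈ I := hI ▸ mem_iUnion₂_of_mem (mem_range_self x) hu
    exact ⟨u, huI, by simpa only [eq_of_mem_Icc_leftLim hG hK (hτG u huI) hu]⟩
  · intro u hu v hv
    simpa only [comp_apply, hlevel u hu, hlevel v hv] using hτ_lip hu hv

end FilledGraph

section Jumps

open Function MeasureTheory ProbabilityTheory

theorem antilipschitzWith_inv_of_mul_sub_le {f : ℝ → ℝ} {c : ℝ≥0} (hc : c ≠ 0)
    (hf : ∀ s t, s ≤ t → c * (t - s) ≤ f t - f s) : AntilipschitzWith c⁻¹ f := by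
  refine .of_le_mul_dist fun s t => ?_
  wlog hst : s ≤ t generalizing s t
  · simpa only [dist_comm] using this t s (le_of_not_ge hst)
  have hc' : (0 : ℝ) < c := NNReal.coe_pos.2 (pos_of_ne_zero hc)
  rw [dist_comm s, dist_comm (f s), Real.dist_eq, Real.dist_eq, abs_of_nonneg (sub_nonneg.2 hst),
    NNReal.coe_inv, ← div_eq_inv_mul, le_div_iff₀' hc']
  exact (hf s t hst).trans (le_abs_self _)

theorem exists_stieltjesFunction_of_range_eq_Icc {X : Type*} [TopologicalSpace X]
    [TopologicalSpace.SeparableSpace X] [Nonempty X] {φ : X → ℝ} (hφ : Continuous φ)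
    (hrange : range φ = Icc 0 1) :
    ∃ G : StieltjesFunction ℝ, AntilipschitzWith 2⁻¹ G ∧ (∀ t < 0, G t = 2 * t) ∧
      (∀ t ≥ 1, G t = 2 * t + 1) ∧ ∀ t, leftLim G t = G t → interior {x | φ x = t} = ∅ := by
  borelize X
  obtain ⟨μ, hμ, hμo⟩ := exists_isProbabilityMeasure_isOpenPosMeasure X
  have hmem : ∀ x, φ x ∈ Icc 0 1 := fun x => hrange ▸ mem_range_self x
  have hν : IsProbabilityMeasure (μ.map φ) :=
    Measure.isProbabilityMeasure_map hφ.measurable.aemeasurable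
  let G : StieltjesFunction ℝ := cdf (μ.map φ) + (2 : ℝ≥0) • StieltjesFunction.id
  have hG : ∀ t, G t = μ.real (φ ⁻¹' Iic t) + 2 * t := fun t => by
    rw [← map_measureReal_apply hφ.measurable measurableSet_Iic, ← cdf_eq_real]
    rfl
  refine ⟨G, antilipschitzWith_inv_of_mul_sub_le two_ne_zero fun s t hst => ?_,
    fun t ht => ?_, fun t ht => ?_, fun t ht => ?_⟩
  · have := measureReal_mono (μ := μ) (preimage_mono (f := φ) (Iic_subset_Iic.2 hst))
    rw [hG, hG]
    push_cast
    linarith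
  · have hempty : φ ⁻¹' Iic t = ∅ :=
      eq_empty_of_forall_notMem fun x hx => ((hmem x).1.trans hx).not_gt ht
    rw [hG, hempty, measureReal_empty, zero_add]
  · have huniv : φ ⁻¹' Iic t = univ := eq_univ_of_forall fun x => (hmem x).2.trans ht
    rw [hG, huniv, probReal_univ, add_comm]
  · have hnull : G.measure {t} = 0 := by rw [G.measure_singleton, ht, sub_self, ENNReal.ofReal_zero]
    rw [StieltjesFunction.measure_add, Measure.add_apply, measure_cdf, add_eq_zero,
      Measure.map_apply hφ.measurable (measurableSet_singleton t)] at hnull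
    exact μ.interior_eq_empty_of_null hnull.1

end Jumps

section Parametrization

open Function

theorem iUnion_Icc_leftLim_eq_Icc {G : StieltjesFunction ℝ} (hneg : ∀ t < 0, G t = 2 * t)
    (hpos : ∀ t ≥ 1, G t = 2 * t + 1) :
    ⋃ t ∈ Icc (0 : ℝ) 1, Icc (leftLim G t) (G t) = Icc 0 3 := by
  have hbot : Tendsto G atBot atBot := (tendsto_id.const_mul_atBot two_pos).congr' <| by
    filter_upwards [eventually_lt_atBot 0] with t ht using (hneg t ht).symm
  have htop : Tendsto G atTop atTop :=
    (tendsto_atTop_add_const_right _ 1 (tendsto_id.const_mul_atTop two_pos)).congr' <| by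
      filter_upwards [eventually_ge_atTop 1] with t ht using (hpos t ht).symm
  have hleftLim_zero : 0 ≤ leftLim G 0 := by
    by_contra! hlt
    have hlt' : leftLim G 0 / 4 < 0 := by linarith
    linarith [G.mono.le_leftLim hlt', hneg _ hlt']
  have hone : G 1 = 3 := by norm_num [hpos]
  refine Subset.antisymm (iUnion₂_subset fun t ht => Icc_subset_Icc
    (hleftLim_zero.trans (G.mono.leftLim ht.1)) ((G.mono ht.2).trans_eq hone)) fun u hu => ?_
  obtain ⟨t, ht⟩ := exists_mem_Icc_leftLim G hbot htop u
  refine mem_iUnion₂.2 ⟨t, ⟨?_, ?_⟩, ht⟩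
  · by_contra! hlt
    linarith [hneg t hlt, hu.1, ht.2]
  · by_contra! hlt
    obtain ⟨s, hs, hst⟩ := exists_between hlt
    linarith [hpos s hs.le, G.mono.le_leftLim hst, ht.1, hu.2]

theorem HasThinCuts.exists_parametrization {X : Type*} [MetricSpace X]
    [CompactSpace X] [LocallyConnectedSpace X] [ConnectedSpace X] {φ : X → ℝ}
    (hthin : HasThinCuts φ) (hφ : Continuous φ) (hrange : range φ = Icc 0 1) :
    ∃ Γ : ℝ → X, UniformContinuous Γ ∧ Γ '' Icc 0 3 = univ ∧ LipschitzWith 2⁻¹ (φ ∘ Γ) := by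
  obtain ⟨G, hK, hneg, hpos, hint⟩ := exists_stieltjesFunction_of_range_eq_Icc hφ hrange
  obtain ⟨Γ, hΓ, hΓ_image, hΓ_lip⟩ := hthin.exists_continuousOn_parametrization hφ G.mono hK hint
    (I := Icc 0 3) (by rw [hrange, iUnion_Icc_leftLim_eq_Icc hneg hpos])
  have h03 : (0 : ℝ) ≤ 3 := by norm_num
  have hproj : LipschitzWith 1 (projIcc (0 : ℝ) 3 h03) := .projIcc h03
  refine ⟨IccExtend h03 ((Icc 0 3).domRestrict Γ), ?_, ?_, ?_⟩
  · exact (CompactSpace.uniformContinuous_of_continuous hΓ.domRestrict).comp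
      hproj.uniformContinuous
  · rw [← hΓ_image]
    exact image_congr fun u hu => IccExtend_of_mem h03 _ hu
  · rw [← mul_one (2⁻¹ : ℝ≥0)]
    exact (lipschitzOnWith_iff_restrict.1 hΓ_lip).comp hproj

end Parametrization

theorem exists_topContractive_pair {X : Type*} [MetricSpace X] {φ : X → ℝ} {Γ : ℝ → X} {a K : ℝ≥0}
    (hφ : Continuous φ) (hrange : range φ = Icc 0 1) (hΓ : UniformContinuous Γ)
    (hΓ_image : Γ '' Icc 0 (2 * a) = univ) (hΓ_lip : LipschitzWith K (φ ∘ Γ)) (ha : 0 < a)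
    (haK : K * a < 1) :
    ∃ f g : X → X, Continuous f ∧ Continuous g ∧ TopContractive {f, g} ∧
      range f ∪ range g = univ := by
  let h (c t : ℝ) : X := Γ (c + a * t)
  have haffine (c : ℝ) : LipschitzWith a (fun t : ℝ => c + a * t) :=
    LipschitzWith.of_dist_le_mul fun s t => by simp [← mul_sub, Real.dist_eq, abs_mul]
  have huc (c : ℝ) : UniformContinuous (h c) := hΓ.comp (haffine c).uniformContinuous
  refine ⟨h 0 ∘ φ, h a ∘ φ, (huc 0).continuous.comp hφ, (huc a).continuous.comp hφ, ?_,
    eq_univ_of_forall fun x => ?_⟩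
  · rw [← image_pair (· ∘ φ)]
    refine topContractive_image_comp (hrange ▸ Metric.isBounded_Icc 0 1) (toFinite _) ?_ haK ?_
    · rintro _ (rfl | rfl) <;> exact hΓ_lip.comp (haffine _)
    · rintro _ (rfl | rfl) <;> exact huc _
  · have ha' : (0 : ℝ) < a := ha
    have hmem {c u : ℝ} (hc : c ≤ u) (hu : u ≤ c + a) : Γ u ∈ range (h c ∘ φ) := by
      obtain ⟨y, hy⟩ : (u - c) / a ∈ range φ := hrange ▸
        ⟨div_nonneg (sub_nonneg.2 hc) ha'.le, (div_le_one ha').2 (sub_le_iff_le_add'.2 hu)⟩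
      refine ⟨y, congrArg Γ ?_⟩
      rw [hy, mul_div_cancel₀ _ ha'.ne', add_sub_cancel]
    obtain ⟨u, hu, rfl⟩ := hΓ_image.superset (mem_univ x)
    rcases le_total u a with hua | hau
    · exact Or.inl (hmem hu.1 (by rwa [zero_add]))
    · exact Or.inr (hmem hau (by rw [← two_mul]; exact hu.2))

/-- Every Peano continuum with uncountably many cut points is a topological fractal
with witnessing number two: there are two continuous self-maps `f, g` such that
`{f, g}` is topologically contractive and `f(X) ∪ g(X) = X`. -/
theorem peano_uncountably_many_cut_points_is_topological_fractal
    (X : Type*) [MetricSpace X] [CompactSpace X] [ConnectedSpace X]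
    [LocallyConnectedSpace X] [Nonempty X]
    (h : ¬ ({x : X | IsCutPoint x}).Countable) :
    ∃ f g : X → X, Continuous f ∧ Continuous g ∧
      TopContractive {f, g} ∧ Set.range f ∪ Set.range g = Set.univ := by
  obtain ⟨φ, hφ, hthin, hrange⟩ := exists_continuous_hasThinCuts_of_not_countable_isCutPoint h
  obtain ⟨Γ, hΓ, hΓ_image, hΓ_lip⟩ := hthin.exists_parametrization hφ hrange
  exact exists_topContractive_pair (a := 3 / 2) hφ hrange hΓ (by norm_num [hΓ_image]) hΓ_lip
    (by positivity) (by norm_num)
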